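/- Let k be an algebraically closed field of characteristic 2, let t be an odd positive integer, let n = 2 + t, let a be a nonzero element of k, and let s be a positive integer. Then the polynomial f = Y^n - a·X^s·Y^t + 1 over the rational function field k(X) has n distinct roots in a splitting field, and the image of its Galois group in the group of permutations of this set of roots is the full symmetric group on those n roots. -/

import Mathlib

open Polynomial

open scoped Classical

/-!
Put `T = a * X ^ s` and regard `k(T)` as a subfield of `F = k((u))` through `T = u ^ (-t)`. By
Hensel's lemma the trinomial has a root `u + ⋯` in `F`, and the automorphisms `u ↦ ζ * u` of
`F` over `k(T)`, for `ζ ^ t = 1`, carry it to `t` distinct roots. All roots in `F` have order `1`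
whereas the product of all `2 + t` roots is `± 1`, so two roots lie outside `F`, and conjugating
them over `F` is a transposition. Together with the rotations of the other `t` roots, and since
`2 + t` is odd, this makes the irreducible trinomial's group over `k(T)` primitive, hence
symmetric.

To pass from `k(T)` to `k(X)`, lift a transposition of the roots to an automorphism of the algebraic
closure over `k(T)`. It multiplies `X` by a root of unity, which has odd order in characteristic
`2`; the corresponding odd power of the automorphism fixes `k(X)` and induces the same
transposition.

Both steps use roots of unity in `k`. Enlarging `k` to its algebraic closure provides them, and can
only shrink the Galois group.
-/

section SymmetricGroup

variable {S : Type*} {G : Subgroup (Equiv.Perm S)}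

theorem mem_of_isBlock_of_apply_mem {B : Set S} (hB : MulAction.IsBlock G B) {g : Equiv.Perm S}
    (hg : g ∈ G) {x y : S} (hx : x ∈ B) (hgx : g x ∈ B) (hy : y ∈ B) : g y ∈ B := by
  rw [← hB.smul_eq_of_mem (g := ⟨g, hg⟩) hx hgx]
  exact Set.smul_mem_smul_set (a := (⟨g, hg⟩ : G)) hy

variable [DecidableEq S]

/-- A block that meets both the support and the fixed points of a transposition `τ` is everything:
it is `τ`-stable, hence contains the support, and is then stable under the elements that move the
fixed points around. -/
theorem block_eq_univ_of_fixed_mem {α β : S}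
    (hswap : Equiv.swap α β ∈ G)
    (htrans : ∀ x y, x ∉ ({α, β} : Set S) → y ∉ ({α, β} : Set S) →
      ∃ g ∈ G, g x = y ∧ g α ∈ ({α, β} : Set S))
    {B : Set S} (hB : MulAction.IsBlock G B) (hα : α ∈ B)
    {x : S} (hx : x ∈ B) (hx' : x ∉ ({α, β} : Set S)) : B = Set.univ := by
  have hsub : ({α, β} : Set S) ⊆ B := by
    have hfix : Equiv.swap α β x = x :=
      Equiv.swap_apply_of_ne_of_ne (fun h ↦ hx' (.inl h)) (fun h ↦ hx' (.inr h))
    have hβ := mem_of_isBlock_of_apply_mem hB hswap hx (by rwa [hfix]) hα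
    rw [Equiv.swap_apply_left] at hβ
    exact Set.pair_subset hα hβ
  refine Set.eq_univ_of_forall fun y ↦ ?_
  by_cases hy : y ∈ ({α, β} : Set S)
  · exact hsub hy
  · obtain ⟨g, hg, rfl, hgα⟩ := htrans x y hx' hy
    exact mem_of_isBlock_of_apply_mem hB hg hα (hsub hgα) hx

theorem subgroup_eq_top_of_swap_mem_of_odd_card [Finite S] [MulAction.IsPretransitive G S]
    (hodd : Odd (Nat.card S)) {α β : S} (hne : α ≠ β) (hswap : Equiv.swap α β ∈ G)
    (htrans : ∀ x y, x ∉ ({α, β} : Set S) → y ∉ ({α, β} : Set S) →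
      ∃ g ∈ G, g x = y ∧ g α ∈ ({α, β} : Set S)) : G = ⊤ := by
  suffices MulAction.IsPreprimitive G S from
    Equiv.Perm.subgroup_eq_top_of_isPreprimitive_of_isSwap_mem this _ ⟨α, β, hne, rfl⟩ hswap
  refine .of_isTrivialBlock_base α fun {B} hα hB ↦ ?_
  by_cases hx : B ⊆ {α, β}
  · left
    have hcard : B.ncard ≤ 2 := (Set.ncard_le_ncard hx).trans (Set.ncard_pair hne).le
    have hodd' : Odd B.ncard := hodd.of_dvd_nat (hB.ncard_dvd_card ⟨α, hα⟩)
    exact Set.ncard_le_one_iff_subsingleton.mp (by grind)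
  · right
    obtain ⟨x, hxB, hx'⟩ := Set.not_subset.mp hx
    exact block_eq_univ_of_fixed_mem hswap htrans hB hα hxB hx'

theorem isSwap_and_fixed_mem_of_card_le_ncard_add_two [Finite S] {g : Equiv.Perm S} (hg : g ≠ 1)
    {A : Set S} (hA : ∀ x ∈ A, g x = x) (hcard : Nat.card S ≤ A.ncard + 2) :
    g.IsSwap ∧ ∀ x, g x = x → x ∈ A := by
  have := Fintype.ofFinite S
  have hsub : A ⊆ ↑g.supportᶜ := fun x hx ↦ by simpa using hA x hx
  have hsplit : g.support.card + g.supportᶜ.card = Nat.card S := by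
    rw [Finset.card_add_card_compl, Nat.card_eq_fintype_card]
  have hle : A.ncard ≤ g.supportᶜ.card := by
    rw [← Set.ncard_coe_finset]
    exact Set.ncard_le_ncard hsub
  have htwo := Equiv.Perm.two_le_card_support_of_ne_one hg
  refine ⟨Equiv.Perm.card_support_eq_two.mp (by lia), fun x hx ↦ ?_⟩
  rw [Set.eq_of_subset_of_ncard_le hsub (by rw [Set.ncard_coe_finset]; lia)]
  simpa using hx

end SymmetricGroup

section Galois

theorem galActionHom_range_eq_top_iff_natCard {F : Type*} [Field F] (p : F[X]) (E : Type*)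
    [Field E] [Algebra F E] [Fact (p.map (algebraMap F E)).Splits] :
    (Gal.galActionHom p E).range = ⊤ ↔
      Nat.card p.Gal = (Nat.card (p.rootSet p.SplittingField)).factorial := by
  rw [Nat.card_congr (Gal.rootsEquivRoots p E), ← Nat.card_perm,
    Nat.card_congr (MonoidHom.ofInjective (Gal.galActionHom_injective p E)).toEquiv]
  exact ⟨fun h ↦ by rw [h, Subgroup.card_top], Subgroup.eq_top_of_card_eq _⟩

theorem isPretransitive_galActionHom_range {F : Type*} [Field F] (p : F[X]) (E : Type*) [Field E]
    [Algebra F E] [Fact (p.map (algebraMap F E)).Splits] (hp : Irreducible p) :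
    MulAction.IsPretransitive (Gal.galActionHom p E).range (p.rootSet E) := by
  have := Gal.galAction_isPretransitive p E hp
  refine ⟨fun x y ↦ ?_⟩
  obtain ⟨g, hg⟩ := MulAction.exists_smul_eq p.Gal x y
  exact ⟨⟨_, g, rfl⟩, hg⟩

variable {K F Ω : Type*} [Field K] [Field F] [Field Ω] [Algebra K F] [Algebra K Ω] [Algebra F Ω]
  [IsScalarTower K F Ω] {P : K[X]} [Fact (P.map (algebraMap K Ω)).Splits]

theorem exists_mem_rootSet_notMem_range (hF : ¬ (P.map (algebraMap K F)).Splits) :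
    ∃ x ∈ P.rootSet Ω, x ∉ Set.range (algebraMap F Ω) := by
  by_contra! hall
  have hmap : (P.map (algebraMap K F)).map (algebraMap F Ω) = P.map (algebraMap K Ω) := by
    rw [map_map, ← IsScalarTower.algebraMap_eq]
  refine hF (Splits.of_splits_map (algebraMap F Ω) (by rw [hmap]; exact Fact.out) fun x hx ↦ ?_)
  rw [hmap] at hx
  exact hall x (by simpa [rootSet_def] using hx)

theorem galActionHom_range_eq_top_of_map_eq [Normal F Ω] {Q : F[X]}
    [Fact (Q.map (algebraMap F Ω)).Splits] (hPQ : P.map (algebraMap K F) = Q)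
    (hQ : (Gal.galActionHom Q Ω).range = ⊤) : (Gal.galActionHom P Ω).range = ⊤ := by
  have hroots : Q.rootSet Ω = P.rootSet Ω := by simp only [← hPQ, rootSet_def, aroots_map]
  let e := Equiv.setCongr hroots
  refine (Subgroup.eq_top_iff' _).mpr fun π ↦ ?_
  obtain ⟨g, hg⟩ : e.symm.permCongr π ∈ (Gal.galActionHom Q Ω).range := hQ ▸ Subgroup.mem_top _
  obtain ⟨σ, rfl⟩ := Gal.restrict_surjective Q Ω g
  refine ⟨Gal.restrict P Ω (σ.restrictScalars K), Equiv.ext fun r ↦ Subtype.ext ?_⟩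
  have hσ := Gal.galActionHom_restrict Q Ω σ (e.symm r)
  rw [hg] at hσ
  rw [Gal.galActionHom_restrict]
  exact hσ.symm

variable [IsAlgClosure F Ω]

theorem exists_algEquiv_apply_ne_of_isSeparable {x : Ω} (hsep : IsSeparable F x)
    (hx : x ∉ Set.range (algebraMap F Ω)) : ∃ σ : Ω ≃ₐ[F] Ω, σ x ≠ x := by
  have := IsAlgClosure.isAlgClosed F (K := Ω)
  have := IsAlgClosure.normal F Ω
  have hx' : x ∉ (⊥ : Subalgebra F Ω) := by rwa [Algebra.mem_bot]
  obtain ⟨y, hne, hconj⟩ :=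
    (notMem_iff_exists_ne_and_isConjRoot hsep (IsAlgClosed.splits _)).mp hx'
  obtain ⟨σ, rfl⟩ := hconj.symm.exists_algEquiv
  exact ⟨σ, hne.symm⟩

theorem exists_algEquiv_restrict_eq (e : F ≃ₐ[K] F) :
    ∃ ρ : Ω ≃ₐ[K] Ω, ∀ x, ρ (algebraMap F Ω x) = algebraMap F Ω (e x) := by
  refine ⟨.ofRingEquiv (f := IsAlgClosure.equivOfEquiv Ω Ω (e : F ≃+* F)) fun x ↦ ?_, fun x ↦
    IsAlgClosure.equivOfEquiv_algebraMap Ω Ω (e : F ≃+* F) x⟩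
  rw [IsScalarTower.algebraMap_apply K F Ω, IsAlgClosure.equivOfEquiv_algebraMap]
  simp

theorem exists_isSwap_galActionHom_restrict (hsep : P.Separable)
    (hF : ¬ (P.map (algebraMap K F)).Splits) {A : Set F} (hA : A ⊆ P.rootSet F)
    (hcard : P.natDegree ≤ A.ncard + 2) :
    ∃ σ : Ω ≃ₐ[F] Ω,
      (Gal.galActionHom P Ω (Gal.restrict P Ω (σ.restrictScalars K))).IsSwap ∧
        ∀ x ∈ P.rootSet Ω, σ x = x → x ∈ algebraMap F Ω '' A := by
  obtain ⟨α, hα, hαF⟩ := exists_mem_rootSet_notMem_range (Ω := Ω) hF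
  have hsepα : IsSeparable F α := by
    refine (hsep.map (f := algebraMap K F)).of_dvd (minpoly.dvd F α ?_)
    rw [aeval_map_algebraMap, aeval_eq_zero_of_mem_rootSet hα]
  obtain ⟨σ, hσ⟩ := exists_algEquiv_apply_ne_of_isSeparable hsepα hαF
  set g := Gal.galActionHom P Ω (Gal.restrict P Ω (σ.restrictScalars K))
  have hg (x : P.rootSet Ω) : (g x : Ω) = σ x := Gal.galActionHom_restrict P Ω _ x
  have hg_ne : g ≠ 1 := fun h ↦ hσ (by simpa [h] using (hg ⟨α, hα⟩).symm)
  let A' : Set (P.rootSet Ω) := Subtype.val ⁻¹' (algebraMap F Ω '' A)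
  have hA' : A'.ncard = A.ncard := by
    rw [Set.ncard_preimage_of_injective_subset_range Subtype.val_injective,
      Set.ncard_image_of_injective _ (algebraMap F Ω).injective]
    rintro _ ⟨y, hy, rfl⟩
    simpa using rootSet_mapsTo (IsScalarTower.toAlgHom K F Ω) (hA hy)
  have hfixed : ∀ x ∈ A', g x = x := by
    rintro x ⟨y, -, hy⟩
    exact Subtype.ext (by rw [hg, ← hy, AlgEquiv.commutes])
  have hroots : Nat.card (P.rootSet Ω) = P.natDegree := by
    rw [Nat.card_eq_fintype_card, card_rootSet_eq_natDegree hsep Fact.out]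
  obtain ⟨hswap, hfixed'⟩ :=
    isSwap_and_fixed_mem_of_card_le_ncard_add_two hg_ne hfixed (by lia)
  exact ⟨σ, hswap, fun x hx hσx ↦ hfixed' ⟨x, hx⟩ (Subtype.ext (by rw [hg]; exact hσx))⟩

variable (Ω) in
theorem galActionHom_range_eq_top_of_orbit (hirr : Irreducible P) (hsep : P.Separable)
    (hodd : Odd P.natDegree) (hF : ¬ (P.map (algebraMap K F)).Splits) {y : F}
    (hy : y ∈ P.rootSet F)
    (hcard : P.natDegree ≤ (MulAction.orbit (F ≃ₐ[K] F) y).ncard + 2) :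
    (Gal.galActionHom P Ω).range = ⊤ := by
  have horbit : MulAction.orbit (F ≃ₐ[K] F) y ⊆ P.rootSet F := by
    rintro _ ⟨e, rfl⟩
    exact rootSet_mapsTo (e : F →ₐ[K] F) hy
  obtain ⟨σ, ⟨α, β, hne, hswap⟩, hfixed⟩ :=
    exists_isSwap_galActionHom_restrict (Ω := Ω) hsep hF horbit hcard
  have hσ (x : P.rootSet Ω) : (Equiv.swap α β x : Ω) = σ x := by
    rw [← hswap, Gal.galActionHom_restrict, AlgEquiv.restrictScalars_apply]
  have hmem (x : P.rootSet Ω) (hx : x ∉ ({α, β} : Set (P.rootSet Ω))) :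
      (x : Ω) ∈ algebraMap F Ω '' MulAction.orbit (F ≃ₐ[K] F) y := by
    refine hfixed x x.2 ?_
    rw [← hσ, Equiv.swap_apply_of_ne_of_ne (fun h ↦ hx (.inl h)) (fun h ↦ hx (.inr h))]
  have hα : (α : Ω) ∉ Set.range (algebraMap F Ω) := by
    rintro ⟨z, hz⟩
    have := hσ α
    rw [← hz, AlgEquiv.commutes, hz, Equiv.swap_apply_left] at this
    exact hne (Subtype.ext this).symm
  have := isPretransitive_galActionHom_range P Ω hirr
  refine subgroup_eq_top_of_swap_mem_of_odd_card ?_ hne ⟨_, hswap⟩ fun x x' hx hx' ↦ ?_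
  · rwa [Nat.card_eq_fintype_card, card_rootSet_eq_natDegree hsep Fact.out]
  obtain ⟨_, ⟨e, rfl⟩, he⟩ := hmem x hx
  obtain ⟨_, ⟨e', rfl⟩, he'⟩ := hmem x' hx'
  obtain ⟨ρ, hρ⟩ := exists_algEquiv_restrict_eq (Ω := Ω) (e' * e⁻¹)
  refine ⟨_, ⟨Gal.restrict P Ω ρ, rfl⟩, Subtype.ext ?_, ?_⟩
  · rw [Gal.galActionHom_restrict, ← he, hρ, ← he']
    simp [AlgEquiv.mul_apply]
  · by_contra hρα
    obtain ⟨z, -, hz⟩ := hmem _ hρα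
    rw [Gal.galActionHom_restrict] at hz
    refine hα ⟨(e' * e⁻¹)⁻¹ z, ρ.injective ?_⟩
    rw [hρ, ← hz]
    simp [← AlgEquiv.mul_apply]

end Galois

section AbhyankarPoly

/-- Abhyankar's trinomial `Y ^ (2 + t) - T * Y ^ t + 1`, as a polynomial in `Y`. Keeping `T` a
parameter lets one definition serve over `k[T]`, over `k(T)` and over Laurent series. -/
noncomputable def abhyankarPoly {R : Type*} [CommRing R] (t : ℕ) (T : R) : R[X] :=
  X ^ (2 + t) - C T * X ^ t + 1

variable {R : Type*} [CommRing R] (t : ℕ) (T : R)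

theorem aeval_abhyankarPoly {A : Type*} [CommRing A] [Algebra R A] (y : A) :
    aeval y (abhyankarPoly t T) = y ^ (2 + t) - algebraMap R A T * y ^ t + 1 := by
  simp [abhyankarPoly]

theorem map_abhyankarPoly {S : Type*} [CommRing S] (φ : R →+* S) :
    (abhyankarPoly t T).map φ = abhyankarPoly t (φ T) := by
  simp [abhyankarPoly]

theorem natDegree_abhyankarPoly [Nontrivial R] : (abhyankarPoly t T).natDegree = 2 + t := by
  unfold abhyankarPoly
  compute_degree!

theorem monic_abhyankarPoly [Nontrivial R] : (abhyankarPoly t T).Monic := by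
  rw [Monic, leadingCoeff, natDegree_abhyankarPoly, abhyankarPoly]
  compute_degree!

theorem separable_abhyankarPoly {K : Type*} [Field K] {t : ℕ} {T : K} (ht : (t : K) ≠ 0)
    (hT : T ≠ 0) (hirr : Irreducible (abhyankarPoly t T)) : (abhyankarPoly t T).Separable := by
  rw [separable_iff_derivative_ne_zero hirr]
  obtain ⟨m, rfl⟩ := Nat.exists_eq_succ_of_ne_zero (n := t) (by rintro rfl; simp at ht)
  have hcoeff : (derivative (abhyankarPoly (m + 1) T)).coeff m = -(T * ((m + 1 : ℕ) : K)) := by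
    rw [coeff_derivative, abhyankarPoly, coeff_add, coeff_sub, coeff_C_mul, coeff_X_pow_self,
      coeff_X_pow, if_neg (by lia), coeff_one, if_neg (by lia)]
    push_cast
    ring
  intro h
  rw [h, coeff_zero, zero_eq_neg] at hcoeff
  exact mul_ne_zero hT ht hcoeff

/-- The trinomial is linear in `T`, with coprime coefficients, and so is irreducible in `k[T][Y]`;
Gauss's lemma takes this to `k(T)[Y]`. -/
theorem irreducible_abhyankarPoly {k K : Type*} [Field k] [Field K] [Algebra k[X] K]
    [IsFractionRing k[X] K] : Irreducible (abhyankarPoly t (algebraMap k[X] K X)) := by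
  rw [← map_abhyankarPoly,
    ← (monic_abhyankarPoly t (X : k[X])).irreducible_iff_irreducible_map_fraction_map,
    ← MulEquiv.irreducible_iff (Bivariate.swap (R := k))]
  have hlinear : Bivariate.swap (abhyankarPoly t (X : k[X])) =
      C (- X ^ t) * X + C (X ^ (2 + t) + 1) := by
    simp only [abhyankarPoly, map_add, map_sub, map_mul, map_pow, map_one, Bivariate.swap_X,
      Bivariate.swap_Y, map_neg]
    ring
  rw [hlinear]
  refine irreducible_of_degree_eq_one_of_isRelPrime_coeff (degree_linear (by simp))
    (IsCoprime.isRelPrime ⟨1, X ^ 2, ?_⟩)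
  simp only [coeff_add, coeff_C_mul, coeff_C_zero, coeff_C_succ, coeff_X_zero, coeff_X_one]
  ring

theorem separable_abhyankarPoly_algebraMap_X {k K : Type*} [Field k] [Field K] [Algebra k[X] K]
    [IsFractionRing k[X] K] {t : ℕ} (ht : (t : k) ≠ 0) :
    (abhyankarPoly t (algebraMap k[X] K X)).Separable := by
  have hinj := IsFractionRing.injective k[X] K
  refine separable_abhyankarPoly ?_ ((map_ne_zero_iff _ hinj).mpr X_ne_zero)
    (irreducible_abhyankarPoly t)
  rwa [← map_natCast (algebraMap k[X] K), map_ne_zero_iff _ hinj, ← map_natCast C, C_ne_zero]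

end AbhyankarPoly

section LaurentSeries

variable {k : Type*} [Field k] {t : ℕ}

theorem coeff_eval₂_single_neg (ht : 0 < t) (p : k[X]) (n : ℕ) :
    HahnSeries.coeff (p.eval₂ HahnSeries.C (HahnSeries.single (-(t : ℤ)) 1 : LaurentSeries k))
      (n * -(t : ℤ)) = p.coeff n := by
  induction p using Polynomial.induction_on' with
  | add p q hp hq => rw [eval₂_add, HahnSeries.coeff_add, hp, hq, coeff_add]
  | monomial m c =>
    rw [eval₂_monomial, HahnSeries.single_pow, HahnSeries.C_apply, HahnSeries.single_mul_single,
      HahnSeries.coeff_single, coeff_monomial]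
    simp [ht.ne', eq_comm]

theorem injective_eval₂_single_neg (ht : 0 < t) : Function.Injective
    (eval₂RingHom HahnSeries.C (HahnSeries.single (-(t : ℤ)) 1 : LaurentSeries k)) := by
  intro p q hpq
  ext n
  rw [← coeff_eval₂_single_neg ht, ← coeff_eval₂_single_neg ht]
  exact congrArg (HahnSeries.coeff · _) hpq

theorem exists_powerSeries_pow_sub_sq_add_eq_zero (ht : (t : k) ≠ 0) :
    ∃ w : PowerSeries k, PowerSeries.constantCoeff w = 1 ∧
      w ^ (2 + t) - w ^ 2 + PowerSeries.X ^ (2 + t) = 0 := by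
  have ht0 : t ≠ 0 := by rintro rfl; simp at ht
  have hmem (w : PowerSeries k) :
      w ∈ Ideal.span {(PowerSeries.X : PowerSeries k)} ↔ PowerSeries.constantCoeff w = 0 := by
    rw [Ideal.mem_span_singleton, PowerSeries.X_dvd_iff]
  let P : (PowerSeries k)[X] := X ^ (2 + t) - X ^ 2 + C (PowerSeries.X ^ (2 + t))
  have hmonic : P.Monic := by
    have : P = X ^ (2 + t) + (-X ^ 2 + C (PowerSeries.X ^ (2 + t))) := by ring
    rw [this]
    exact monic_X_pow_add ((by compute_degree : degree _ ≤ 2).trans_lt (by norm_cast; lia))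
  have hderiv : P.derivative.eval 1 = PowerSeries.C (t : k) := by
    simp [P, derivative_X_pow, -map_pow]
    ring
  obtain ⟨w, hw, hw1⟩ := HenselianRing.is_henselian (I := .span {(PowerSeries.X : PowerSeries k)})
    P hmonic 1 (by rw [hmem]; simp [P])
    (by rw [hderiv]; exact ((isUnit_iff_ne_zero.mpr ht).map PowerSeries.C).map _)
  refine ⟨w, ?_, by simpa [P] using hw⟩
  rwa [hmem, map_sub, map_one, sub_eq_zero] at hw1

/-- The substitution `y = u / w` turns the trinomial into `w ^ (2 + t) - w ^ 2 + u ^ (2 + t)`, whose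
reduction modulo `u` has the simple root `w = 1`. -/
theorem exists_powerSeries_root (ht : (t : k) ≠ 0) :
    ∃ y : PowerSeries k, PowerSeries.coeff 1 y = 1 ∧
      PowerSeries.X ^ t * (y ^ (2 + t) + 1) = y ^ t := by
  obtain ⟨w, hw1, hw⟩ := exists_powerSeries_pow_sub_sq_add_eq_zero ht
  have hwinv : w * w⁻¹ = 1 := PowerSeries.mul_inv_cancel w (by simp [hw1])
  have hpow (m : ℕ) : w ^ m * w⁻¹ ^ m = 1 := by rw [← mul_pow, hwinv, one_pow]
  refine ⟨PowerSeries.X * w⁻¹, ?_, ?_⟩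
  · simp [PowerSeries.coeff_succ_X_mul 0, hw1]
  · rw [mul_pow, mul_pow]
    linear_combination PowerSeries.X ^ t * (w⁻¹ ^ (2 + t) * hw - hpow (2 + t) +
      w⁻¹ ^ t * hpow 2)

/-- The automorphism `u ↦ z * u` of the field of Laurent series in `u`. -/
noncomputable def laurentRescale (z : kˣ) : LaurentSeries k ≃+* LaurentSeries k :=
  IsFractionRing.ringEquivOfRingEquiv (A := PowerSeries k) (B := PowerSeries k) <|
    .ofRingHom (PowerSeries.rescale (z : k)) (PowerSeries.rescale ((z⁻¹ : kˣ) : k))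
      (by rw [← PowerSeries.rescale_mul]; simp) (by rw [← PowerSeries.rescale_mul]; simp)

theorem laurentRescale_algebraMap (z : kˣ) (p : PowerSeries k) :
    laurentRescale z (algebraMap (PowerSeries k) (LaurentSeries k) p) =
      algebraMap (PowerSeries k) (LaurentSeries k) (PowerSeries.rescale (z : k) p) :=
  IsFractionRing.ringEquivOfRingEquiv_algebraMap _ p

theorem laurentRescale_C (z : kˣ) (c : k) :
    laurentRescale z (HahnSeries.C c) = HahnSeries.C c := by
  have hC : PowerSeries.rescale (z : k) (PowerSeries.C c) = PowerSeries.C c := by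
    ext n
    cases n <;> simp [PowerSeries.coeff_rescale]
  rw [← HahnSeries.ofPowerSeries_C, ← LaurentSeries.coe_algebraMap, laurentRescale_algebraMap, hC]

theorem single_neg_mul_X_pow (t : ℕ) : (HahnSeries.single (-(t : ℤ)) 1 : LaurentSeries k) *
    algebraMap (PowerSeries k) (LaurentSeries k) (PowerSeries.X ^ t) = 1 := by
  rw [LaurentSeries.coe_algebraMap, HahnSeries.ofPowerSeries_X_pow, HahnSeries.single_mul_single]
  simp

theorem laurentRescale_single_neg {z : kˣ} (hz : z ^ t = 1) :
    laurentRescale z (HahnSeries.single (-(t : ℤ)) 1) = HahnSeries.single (-(t : ℤ)) 1 := by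
  have hX : PowerSeries.rescale (z : k) (PowerSeries.X ^ t) = PowerSeries.X ^ t := by
    rw [map_pow, PowerSeries.rescale_X, mul_pow, ← map_pow, ← Units.val_pow_eq_pow_val, hz]
    simp
  rw [eq_inv_of_mul_eq_one_left (single_neg_mul_X_pow t), map_inv₀, laurentRescale_algebraMap, hX]

theorem multiset_prod_order {m : Multiset (LaurentSeries k)} (hm : 0 ∉ m) :
    m.prod.order = (m.map HahnSeries.order).sum := by
  induction m using Multiset.induction_on with
  | empty => simp
  | cons y m ih =>
    rw [Multiset.mem_cons, not_or] at hm
    rw [Multiset.prod_cons, HahnSeries.order_mul (Ne.symm hm.1) (Multiset.prod_ne_zero hm.2),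
      ih hm.2, Multiset.map_cons, Multiset.sum_cons]

theorem order_sub_of_order_ne {x y : LaurentSeries k} (hx : x ≠ 0) (hy : y ≠ 0)
    (h : x.order ≠ y.order) : (x - y).order = min x.order y.order := by
  have hxy : x - y ≠ 0 := fun h0 ↦ h (congrArg HahnSeries.order (sub_eq_zero.mp h0))
  have hval (z : LaurentSeries k) (hz : z ≠ 0) := HahnSeries.addVal_apply_of_ne (x := z) hz
  have hmin := AddValuation.map_add_of_distinct_val (HahnSeries.addVal ℤ k) (x := x) (y := -y)
    (by rw [AddValuation.map_neg, hval x hx, hval y hy]; exact_mod_cast h)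
  rw [← sub_eq_add_neg, AddValuation.map_neg, hval _ hxy, hval x hx, hval y hy] at hmin
  exact_mod_cast hmin

/-- If `v` is the order of a root, then `t * v + min (-t) (2 * v) = 0`, the two terms of the minimum
being distinct because `t` is odd. -/
theorem order_eq_one_of_isRoot (ht : Odd t) {y : LaurentSeries k}
    (hy : (abhyankarPoly t (HahnSeries.single (-(t : ℤ)) 1 : LaurentSeries k)).IsRoot y) :
    y.order = 1 := by
  set T : LaurentSeries k := HahnSeries.single (-(t : ℤ)) 1
  have htpos := ht.pos
  have hT : T.order = -(t : ℤ) := HahnSeries.order_single one_ne_zero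
  have hT0 : T ≠ 0 := HahnSeries.single_ne_zero one_ne_zero
  have hmul : y ^ t * (T - y ^ 2) = 1 := by
    rw [IsRoot.def, ← coe_aeval_eq_eval, aeval_abhyankarPoly, Algebra.algebraMap_self_apply] at hy
    linear_combination -hy
  have hy0 : y ^ t ≠ 0 := left_ne_zero_of_mul_eq_one hmul
  have hy2 : y ^ 2 ≠ 0 := pow_ne_zero 2 (pow_ne_zero_iff htpos.ne' |>.mp hy0)
  have hne : T.order ≠ (y ^ 2).order := by
    rw [hT, HahnSeries.order_pow]
    grind
  have horder := congrArg HahnSeries.order hmul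
  rw [HahnSeries.order_mul hy0 (right_ne_zero_of_mul_eq_one hmul),
    order_sub_of_order_ne hT0 hy2 hne, hT, HahnSeries.order_pow, HahnSeries.order_pow,
    HahnSeries.order_one] at horder
  simp only [nsmul_eq_mul, Nat.cast_ofNat] at horder
  rcases min_choice (-(t : ℤ)) (2 * y.order) with hmin | hmin
  · rw [hmin] at horder
    have : (t : ℤ) * (y.order - 1) = 0 := by linear_combination horder
    rcases mul_eq_zero.mp this with h | h <;> lia
  · rw [hmin] at horder
    have : ((t : ℤ) + 2) * y.order = 0 := by linear_combination horder
    rcases mul_eq_zero.mp this with h | h <;> lia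

/-- Were the trinomial split, the product `± 1` of its roots would have order `2 + t`. -/
theorem not_splits_abhyankarPoly_single_neg (ht : Odd t) :
    ¬ (abhyankarPoly t (HahnSeries.single (-(t : ℤ)) 1 : LaurentSeries k)).Splits := by
  set P := abhyankarPoly t (HahnSeries.single (-(t : ℤ)) 1 : LaurentSeries k)
  intro hsplits
  have hmonic : P.Monic := monic_abhyankarPoly t _
  have horder (y) (hy : y ∈ P.roots) : y.order = 1 :=
    order_eq_one_of_isRoot ht (isRoot_of_mem_roots hy)
  have hzero : 0 ∉ P.roots := fun h ↦ by simpa using horder 0 h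
  have hcoeff : P.coeff 0 = 1 := by simp [P, abhyankarPoly, coeff_zero_eq_eval_zero, ht.pos.ne']
  have hprod := hsplits.coeff_zero_eq_prod_roots_of_monic hmonic
  have hroots : P.roots.prod.order = 2 + t := by
    rw [multiset_prod_order hzero, Multiset.map_congr rfl horder, Multiset.map_const',
      Multiset.sum_replicate, ← hsplits.natDegree_eq_card_roots, natDegree_abhyankarPoly]
    simp
  rw [hcoeff] at hprod
  have := congrArg HahnSeries.order hprod
  rw [HahnSeries.order_mul (by simp) (Multiset.prod_ne_zero hzero), hroots, HahnSeries.order_pow,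
    HahnSeries.order_neg, HahnSeries.order_one] at this
  simp only [nsmul_zero, zero_add] at this
  lia

variable {K : Type*} [Field K] [Algebra k[X] K] [IsFractionRing k[X] K]
  [Algebra K (LaurentSeries k)]

theorem laurentRescale_algebraMap_of_eval₂ (hK : ∀ p : k[X], algebraMap K (LaurentSeries k)
      (algebraMap k[X] K p) = p.eval₂ HahnSeries.C (HahnSeries.single (-(t : ℤ)) 1))
    {z : kˣ} (hz : z ^ t = 1) (x : K) :
    laurentRescale z (algebraMap K (LaurentSeries k) x) = algebraMap K (LaurentSeries k) x := by
  have hcomp : (laurentRescale z : LaurentSeries k →+* LaurentSeries k).comp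
      (algebraMap K (LaurentSeries k)) = algebraMap K (LaurentSeries k) := by
    refine IsLocalization.ringHom_ext (nonZeroDivisors k[X]) (Polynomial.ringHom_ext ?_ ?_)
    · intro c
      simp only [RingHom.comp_apply, hK, eval₂_C]
      exact laurentRescale_C z c
    · simp [hK, laurentRescale_single_neg hz]
  exact DFunLike.congr_fun hcomp x

theorem exists_mem_rootSet_le_ncard_orbit [HasEnoughRootsOfUnity k t] [NeZero t]
    (hK : ∀ p : k[X], algebraMap K (LaurentSeries k)
      (algebraMap k[X] K p) = p.eval₂ HahnSeries.C (HahnSeries.single (-(t : ℤ)) 1)) :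
    ∃ y ∈ (abhyankarPoly t (algebraMap k[X] K X)).rootSet (LaurentSeries k),
      t ≤ (MulAction.orbit (LaurentSeries k ≃ₐ[K] LaurentSeries k) y).ncard := by
  obtain ⟨ζ, hζ⟩ := HasEnoughRootsOfUnity.exists_primitiveRoot k t
  obtain ⟨y, hy1, hy⟩ := exists_powerSeries_root hζ.neZero'.ne
  set P := abhyankarPoly t (algebraMap k[X] K X)
  let ι := algebraMap (PowerSeries k) (LaurentSeries k)
  have hroot : ι y ∈ P.rootSet (LaurentSeries k) := by
    refine mem_rootSet.mpr ⟨(monic_abhyankarPoly t _).ne_zero, ?_⟩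
    have hy' := congrArg ι hy
    rw [aeval_abhyankarPoly, hK, eval₂_X]
    simp only [map_mul, map_add, map_one, map_pow ι y] at hy'
    linear_combination (-(ι y ^ (2 + t) + 1)) * single_neg_mul_X_pow (k := k) t +
      HahnSeries.single (-(t : ℤ)) 1 * hy'
  refine ⟨ι y, hroot, ?_⟩
  let conj (z : rootsOfUnity t k) : LaurentSeries k := ι (PowerSeries.rescale ((z : kˣ) : k) y)
  have hconj : Function.Injective conj := fun z z' h ↦ by
    have := congrArg (PowerSeries.coeff 1) (IsFractionRing.injective (PowerSeries k) _ h)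
    exact Subtype.ext (Units.ext (by simpa [PowerSeries.coeff_rescale, hy1] using this))
  have hrange : Set.range conj ⊆ MulAction.orbit (LaurentSeries k ≃ₐ[K] LaurentSeries k) (ι y) := by
    rintro _ ⟨z, rfl⟩
    exact ⟨.ofRingEquiv (f := laurentRescale z) (laurentRescale_algebraMap_of_eval₂ hK z.2),
      laurentRescale_algebraMap _ y⟩
  have hfinite : (MulAction.orbit (LaurentSeries k ≃ₐ[K] LaurentSeries k) (ι y)).Finite := by
    refine (rootSet_finite P (LaurentSeries k)).subset ?_
    rintro _ ⟨e, rfl⟩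
    exact rootSet_mapsTo (e : LaurentSeries k →ₐ[K] LaurentSeries k) hroot
  calc t = Nat.card (rootsOfUnity t k) := (HasEnoughRootsOfUnity.natCard_rootsOfUnity k t).symm
    _ = (Set.range conj).ncard := (Nat.card_range_of_injective hconj).symm
    _ ≤ _ := Set.ncard_le_ncard hrange hfinite

end LaurentSeries

theorem galActionHom_abhyankarPoly_range_eq_top {k K : Type*} [Field k] [Field K] [Algebra k[X] K]
    [IsFractionRing k[X] K] {t : ℕ} [HasEnoughRootsOfUnity k t] (ht : Odd t) (Ω : Type*) [Field Ω]
    [Algebra K Ω]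
    [Fact (((abhyankarPoly t (algebraMap k[X] K X)).map (algebraMap K Ω)).Splits)] :
    (Gal.galActionHom (abhyankarPoly t (algebraMap k[X] K X)) Ω).range = ⊤ := by
  have : NeZero t := ⟨ht.pos.ne'⟩
  let _ : Algebra K (LaurentSeries k) :=
    (IsFractionRing.lift (injective_eval₂_single_neg (k := k) ht.pos)).toAlgebra
  have hK (p : k[X]) : algebraMap K (LaurentSeries k) (algebraMap k[X] K p) =
      p.eval₂ HahnSeries.C (HahnSeries.single (-(t : ℤ)) 1) :=
    IsFractionRing.lift_algebraMap (injective_eval₂_single_neg ht.pos) p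
  set P := abhyankarPoly t (algebraMap k[X] K X) with hP
  have hirr : Irreducible P := irreducible_abhyankarPoly t
  have hdeg : P.natDegree = 2 + t := natDegree_abhyankarPoly t _
  have hsep : P.Separable := by
    obtain ⟨ζ, hζ⟩ := HasEnoughRootsOfUnity.exists_primitiveRoot k t
    exact separable_abhyankarPoly_algebraMap_X hζ.neZero'.ne
  have hnot : ¬ (P.map (algebraMap K (LaurentSeries k))).Splits := by
    rw [hP, map_abhyankarPoly, hK, eval₂_X]
    exact not_splits_abhyankarPoly_single_neg ht
  obtain ⟨y, hy, hcard⟩ := exists_mem_rootSet_le_ncard_orbit hK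
  have : Fact (P.map (algebraMap K (AlgebraicClosure (LaurentSeries k)))).Splits :=
    ⟨IsAlgClosed.splits _⟩
  rw [galActionHom_range_eq_top_iff_natCard,
    ← galActionHom_range_eq_top_iff_natCard P (AlgebraicClosure (LaurentSeries k))]
  exact galActionHom_range_eq_top_of_orbit _ hirr hsep (by rw [hdeg]; exact even_two.add_odd ht)
    hnot hy (by lia)

section OddPowers

variable {F E Ω : Type*} [Field F] [Field E] [Field Ω] [Algebra F E] [Algebra E Ω] [Algebra F Ω]
  [IsScalarTower F E Ω]

theorem galActionHom_map_range_eq_top_of_odd_pow [Normal F Ω] {P : F[X]}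
    [Fact (P.map (algebraMap F Ω)).Splits]
    [Fact ((P.map (algebraMap F E)).map (algebraMap E Ω)).Splits]
    (hP : (Gal.galActionHom P Ω).range = ⊤)
    (hpow : ∀ σ : Ω ≃ₐ[F] Ω, ∃ m, Odd m ∧
      ∀ x, (σ ^ m) (algebraMap E Ω x) = algebraMap E Ω x) :
    (Gal.galActionHom (P.map (algebraMap F E)) Ω).range = ⊤ := by
  rw [eq_top_iff, ← Equiv.Perm.closure_isSwap, Subgroup.closure_le]
  rintro π ⟨α, β, -, rfl⟩
  have hroots : (P.map (algebraMap F E)).rootSet Ω = P.rootSet Ω := by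
    simp only [rootSet_def, aroots_map]
  let e := Equiv.setCongr hroots
  obtain ⟨g, hg⟩ : e.symm.permCongr.symm (Equiv.swap α β) ∈ (Gal.galActionHom P Ω).range := by
    rw [hP]
    trivial
  obtain ⟨σ, rfl⟩ := Gal.restrict_surjective P Ω g
  have hσ (r : (P.map (algebraMap F E)).rootSet Ω) : σ r = Equiv.swap α β r := by
    have := Gal.galActionHom_restrict P Ω σ (e r)
    rw [hg] at this
    exact this.symm
  obtain ⟨_, ⟨m, rfl⟩, hm⟩ := hpow σ
  have hσ_pow (r : (P.map (algebraMap F E)).rootSet Ω) : (σ ^ (2 * m + 1)) r = σ r := by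
    have hsq : (σ ^ 2) (r : Ω) = r := by simp [sq, hσ]
    have : ((σ ^ 2) ^ m) (r : Ω) = r := by
      rw [AlgEquiv.coe_pow]
      exact Function.iterate_fixed hsq m
    rw [pow_succ', pow_mul, AlgEquiv.mul_apply, this]
  let τ : Ω ≃ₐ[E] Ω := .ofRingEquiv (f := ((σ ^ (2 * m + 1) : Ω ≃ₐ[F] Ω) : Ω ≃+* Ω)) hm
  refine ⟨Gal.restrict _ Ω τ, Equiv.ext fun r ↦ Subtype.ext ?_⟩
  rw [Gal.galActionHom_restrict, ← hσ, ← hσ_pow]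
  rfl

/-- The ratio `σ x / x` is a root of unity, so lies in `k`, and has odd order since the
characteristic is `2`. -/
theorem exists_odd_pow_apply_eq {k : Type*} [Field k] [IsAlgClosed k] [CharP k 2] [Algebra k Ω]
    (σ : Ω ≃ₐ[k] Ω) {s : ℕ} (hs : s ≠ 0) {x : Ω} (hx : σ (x ^ s) = x ^ s) :
    ∃ m, Odd m ∧ (σ ^ m) x = x := by
  rcases eq_or_ne x 0 with rfl | hx0
  · exact ⟨1, odd_one, map_zero _⟩
  have := charP_of_injective_algebraMap (algebraMap k Ω).injective 2
  obtain ⟨e, m, hm, rfl⟩ := Nat.exists_eq_two_pow_mul_odd hs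
  have hroot : (σ x / x) ^ m = 1 := by
    rw [← ExpChar.pow_prime_pow_mul_eq_one_iff 2 e, div_pow, ← map_pow, hx,
      div_self (pow_ne_zero _ hx0)]
  have hint : IsIntegral k (σ x / x) :=
    ⟨X ^ m - 1, monic_X_pow_sub_C 1 hm.pos.ne', by simp [hroot]⟩
  obtain ⟨c, hc⟩ := minpoly.mem_range_of_degree_eq_one _ _
    (IsAlgClosed.degree_eq_one_of_irreducible k (minpoly.irreducible hint))
  have hpow (i : ℕ) : (σ ^ i) x = (σ x / x) ^ i * x := by
    induction i with
    | zero => simp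
    | succ i ih =>
      rw [pow_succ', AlgEquiv.mul_apply, ih, map_mul, map_pow, ← hc, AlgEquiv.commutes, hc,
        pow_succ, mul_assoc, div_mul_cancel₀ _ hx0]
  exact ⟨m, hm, by rw [hpow, hroot, one_mul]⟩

theorem normal_of_adjoin_simple_eq_top [IsAlgClosure E Ω] {x : E}
    (hx : IntermediateField.adjoin F {x} = ⊤) (hint : IsIntegral F x) : Normal F Ω := by
  have := IntermediateField.isAlgebraic_adjoin_simple hint
  rw [hx] at this
  have : Algebra.IsAlgebraic F E := IntermediateField.topEquiv.isAlgebraic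
  have := IsAlgClosure.isAlgebraic (R := E) (K := Ω)
  have : IsAlgClosure F Ω := ⟨IsAlgClosure.isAlgClosed E, .trans F E Ω⟩
  exact IsAlgClosure.normal F Ω

theorem galActionHom_map_range_eq_top_of_pow_mem {k : Type*} [Field k] [IsAlgClosed k] [CharP k 2]
    [Algebra k F] [Algebra k Ω] [IsScalarTower k F Ω] [IsAlgClosure E Ω] {P : F[X]}
    [Fact (P.map (algebraMap F Ω)).Splits]
    [Fact ((P.map (algebraMap F E)).map (algebraMap E Ω)).Splits]
    (hP : (Gal.galActionHom P Ω).range = ⊤) {x : E} (hx : IntermediateField.adjoin F {x} = ⊤)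
    {s : ℕ} (hs : s ≠ 0) (hxs : x ^ s ∈ Set.range (algebraMap F E)) :
    (Gal.galActionHom (P.map (algebraMap F E)) Ω).range = ⊤ := by
  obtain ⟨c, hc⟩ := hxs
  have hint : IsIntegral F x := .of_pow hs.bot_lt (hc ▸ isIntegral_algebraMap)
  have := normal_of_adjoin_simple_eq_top (Ω := Ω) hx hint
  have hadjoin : Algebra.adjoin F {x} = ⊤ := by
    rw [← IntermediateField.adjoin_simple_toSubalgebra_of_isAlgebraic, hx,
      IntermediateField.top_toSubalgebra]
    exact hint.isAlgebraic
  refine galActionHom_map_range_eq_top_of_odd_pow hP fun σ ↦ ?_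
  obtain ⟨m, hm, hσm⟩ := exists_odd_pow_apply_eq (σ.restrictScalars k) hs (x := algebraMap E Ω x)
    (by rw [← map_pow, ← hc, ← IsScalarTower.algebraMap_apply]; exact σ.commutes c)
  have hcomp : ((σ ^ m : Ω ≃ₐ[F] Ω) : Ω →ₐ[F] Ω).comp (IsScalarTower.toAlgHom F E Ω) =
      IsScalarTower.toAlgHom F E Ω := by
    refine AlgHom.ext_of_adjoin_eq_top hadjoin ?_
    rintro _ rfl
    rw [AlgEquiv.coe_pow] at hσm
    simpa [AlgEquiv.coe_pow] using hσm
  exact ⟨m, hm, DFunLike.congr_fun hcomp⟩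

end OddPowers

section Transcendental

open IntermediateField

variable {k L : Type*} [Field k] [Field L] [Algebra k L] {T : L}

theorem isFractionRing_adjoin_simple (hT : Transcendental k T) :
    letI : Algebra k[X] k⟮T⟯ := (aeval (AdjoinSimple.gen k T)).toAlgebra
    IsFractionRing k[X] k⟮T⟯ := by
  let _ : Algebra k[X] k⟮T⟯ := (aeval (AdjoinSimple.gen k T)).toAlgebra
  exact IsLocalization.isLocalization_of_algEquiv _
    (AlgEquiv.ofRingEquiv (f := (RatFunc.algEquivOfTranscendental T hT : RatFunc k ≃+* k⟮T⟯))
      (RatFunc.algEquivOfTranscendental_algebraMap T hT))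

theorem separable_abhyankarPoly_of_transcendental {t : ℕ} (hT : Transcendental k T)
    (ht : (t : k) ≠ 0) : (abhyankarPoly t T).Separable := by
  let _ : Algebra k[X] k⟮T⟯ := (aeval (AdjoinSimple.gen k T)).toAlgebra
  have := isFractionRing_adjoin_simple hT
  have hsep := (separable_abhyankarPoly_algebraMap_X (K := k⟮T⟯) ht).map (f := algebraMap k⟮T⟯ L)
  rw [map_abhyankarPoly, RingHom.algebraMap_toAlgebra] at hsep
  simpa using hsep

theorem galActionHom_abhyankarPoly_range_eq_top_of_pow_mem [IsAlgClosed k] [CharP k 2] {t : ℕ}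
    (ht : Odd t) (hT : Transcendental k T) {x : L} (hx : k⟮x⟯ = ⊤) {s : ℕ} (hs : s ≠ 0)
    (hxs : x ^ s ∈ k⟮T⟯) (Ω : Type*) [Field Ω] [Algebra L Ω]
    [Fact ((abhyankarPoly t T).map (algebraMap L Ω)).Splits] :
    (Gal.galActionHom (abhyankarPoly t T) Ω).range = ⊤ := by
  let _ : Algebra k[X] k⟮T⟯ := (aeval (AdjoinSimple.gen k T)).toAlgebra
  have := isFractionRing_adjoin_simple hT
  have : NeZero (t : k) := ⟨by simp [CharTwo.natCast_eq_ite, Nat.not_even_iff_odd.mpr ht]⟩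
  set P := abhyankarPoly t (algebraMap k[X] k⟮T⟯ X) with hP_def
  have hP : P.map (algebraMap k⟮T⟯ L) = abhyankarPoly t T := by
    rw [hP_def, map_abhyankarPoly, RingHom.algebraMap_toAlgebra]
    simp
  have hx' : adjoin k⟮T⟯ {x} = ⊤ := by
    rw [← restrictScalars_eq_top_iff (K := k), restrictScalars_adjoin_eq_sup, hx, sup_top_eq]
  let Ω' := AlgebraicClosure L
  have : Fact (P.map (algebraMap k⟮T⟯ Ω')).Splits := ⟨IsAlgClosed.splits _⟩
  have : Fact ((P.map (algebraMap k⟮T⟯ L)).map (algebraMap L Ω')).Splits := ⟨IsAlgClosed.splits _⟩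
  have hrange := galActionHom_map_range_eq_top_of_pow_mem (k := k) (E := L) (Ω := Ω')
    (galActionHom_abhyankarPoly_range_eq_top (k := k) ht Ω') hx' hs ⟨⟨_, hxs⟩, rfl⟩
  rw [galActionHom_range_eq_top_iff_natCard] at hrange ⊢
  rwa [← hP]

end Transcendental

theorem transcendental_algebraMap_mul_X_pow {k : Type*} [Field k] {a : k} (ha : a ≠ 0) {s : ℕ}
    (hs : s ≠ 0) : Transcendental k (algebraMap k (RatFunc k) a * RatFunc.X ^ s) := by
  refine fun h ↦ (RatFunc.transcendental_X (K := k)).pow hs.bot_lt ?_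
  have := (isAlgebraic_algebraMap (R := k) (A := RatFunc k) a⁻¹).mul h
  rwa [← mul_assoc, ← map_mul, inv_mul_cancel₀ ha, map_one, one_mul] at this

theorem galActionHom_abhyankarPoly_mul_X_pow_range_eq_top_of_isAlgClosed {k : Type*} [Field k]
    [IsAlgClosed k] [CharP k 2] {t : ℕ} (ht : Odd t) {a : k} (ha : a ≠ 0) {s : ℕ} (hs : s ≠ 0)
    (Ω : Type*) [Field Ω] [Algebra (RatFunc k) Ω]
    [Fact ((abhyankarPoly t (algebraMap k (RatFunc k) a * RatFunc.X ^ s)).map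
      (algebraMap (RatFunc k) Ω)).Splits] :
    (Gal.galActionHom (abhyankarPoly t (algebraMap k (RatFunc k) a * RatFunc.X ^ s)) Ω).range =
      ⊤ := by
  refine galActionHom_abhyankarPoly_range_eq_top_of_pow_mem ht
    (transcendental_algebraMap_mul_X_pow ha hs) RatFunc.adjoin_X hs ?_ Ω
  set T := algebraMap k (RatFunc k) a * RatFunc.X ^ s
  have hX : RatFunc.X ^ s = algebraMap k (RatFunc k) a⁻¹ * T := by
    rw [← mul_assoc, ← map_mul, inv_mul_cancel₀ ha, map_one, one_mul]
  rw [hX]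
  exact mul_mem (algebraMap_mem _ _) (IntermediateField.mem_adjoin_simple_self k T)

theorem galActionHom_abhyankarPoly_mul_X_pow_range_eq_top {k : Type*} [Field k]
    [CharP k 2] {t : ℕ} (ht : Odd t) {a : k} (ha : a ≠ 0) {s : ℕ} (hs : s ≠ 0)
    (Ω : Type*) [Field Ω] [Algebra (RatFunc k) Ω]
    [Fact ((abhyankarPoly t (algebraMap k (RatFunc k) a * RatFunc.X ^ s)).map
      (algebraMap (RatFunc k) Ω)).Splits] :
    (Gal.galActionHom (abhyankarPoly t (algebraMap k (RatFunc k) a * RatFunc.X ^ s)) Ω).range =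
      ⊤ := by
  let k' := AlgebraicClosure k
  have : CharP k' 2 := charP_of_injective_algebraMap (algebraMap k k').injective 2
  have hX : Transcendental k (RatFunc.X : RatFunc k') :=
    (RatFunc.transcendental_X (K := k')).restrictScalars (algebraMap k k').injective
  let φ : RatFunc k →ₐ[k] RatFunc k' := (IntermediateField.val _).comp
    (RatFunc.algEquivOfTranscendental RatFunc.X hX).toAlgHom
  have hφ : φ (algebraMap k (RatFunc k) a * RatFunc.X ^ s) =
      algebraMap k' (RatFunc k') (algebraMap k k' a) * RatFunc.X ^ s := by
    rw [map_mul, map_pow, AlgHom.commutes, IsScalarTower.algebraMap_apply k k']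
    simp [φ]
  let _ : Algebra (RatFunc k) (RatFunc k') := φ.toRingHom.toAlgebra
  let Ω' := AlgebraicClosure (RatFunc k')
  set P := abhyankarPoly t (algebraMap k (RatFunc k) a * RatFunc.X ^ s) with hP
  set Q := abhyankarPoly t (algebraMap k' (RatFunc k') (algebraMap k k' a) * RatFunc.X ^ s)
  have : Fact (P.map (algebraMap (RatFunc k) Ω')).Splits := ⟨IsAlgClosed.splits _⟩
  have : Fact (Q.map (algebraMap (RatFunc k') Ω')).Splits := ⟨IsAlgClosed.splits _⟩
  have hPQ : P.map (algebraMap (RatFunc k) (RatFunc k')) = Q := by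
    rw [hP, map_abhyankarPoly]
    exact congrArg (abhyankarPoly t) hφ
  rw [galActionHom_range_eq_top_iff_natCard, ← galActionHom_range_eq_top_iff_natCard P Ω']
  exact galActionHom_range_eq_top_of_map_eq hPQ
    (galActionHom_abhyankarPoly_mul_X_pow_range_eq_top_of_isAlgClosed ht
      ((map_ne_zero (algebraMap k k')).mpr ha) hs Ω')

theorem stmt_5_general (k : Type*) [Field k] [CharP k 2]
    (t : ℕ) (htodd : Odd t)
    (n : ℕ) (hn : n = 2 + t)
    (a : k) (ha : a ≠ 0) (s : ℕ) (hs : 0 < s)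
    (f : Polynomial (RatFunc k))
    (hf : f = X ^ n - C (algebraMap k (RatFunc k) a * RatFunc.X ^ s) * X ^ t + 1) :
    haveI : Fact ((f.map (algebraMap (RatFunc k) f.SplittingField)).Splits) :=
      ⟨SplittingField.splits f⟩
    Fintype.card (f.rootSet f.SplittingField) = n ∧
      (Polynomial.Gal.galActionHom f f.SplittingField).range = ⊤ := by
  set T : RatFunc k := algebraMap k (RatFunc k) a * RatFunc.X ^ s
  obtain rfl : f = abhyankarPoly t T := by rw [hf, hn, abhyankarPoly]
  have hsplits := SplittingField.splits (abhyankarPoly t T)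
  have : Fact _ := ⟨hsplits⟩
  have ht0 : (t : k) ≠ 0 := by simp [CharTwo.natCast_eq_ite, Nat.not_even_iff_odd.mpr htodd]
  have hsep : (abhyankarPoly t T).Separable :=
    separable_abhyankarPoly_of_transcendental (transcendental_algebraMap_mul_X_pow ha hs.ne') ht0
  refine ⟨?_, galActionHom_abhyankarPoly_mul_X_pow_range_eq_top htodd ha hs.ne' _⟩
  rw [hn, ← natDegree_abhyankarPoly t T, ← card_rootSet_eq_natDegree hsep hsplits]

/-- Abhyankar: over an algebraically closed field `k` of characteristic `2`,
with `t` odd and `n = 2 + t`, the polynomial `Y^n - a·X^s·Y^t + 1` over `k(X)`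
has `n` distinct roots in its splitting field, and the image of its Galois
group in the permutation group of the set of roots is the full symmetric
group on those roots. -/
theorem stmt_5 (k : Type*) [Field k] [IsAlgClosed k] [CharP k 2]
    (t : ℕ) (ht : 0 < t) (htodd : Odd t)
    (n : ℕ) (hn : n = 2 + t)
    (a : k) (ha : a ≠ 0) (s : ℕ) (hs : 0 < s)
    (f : Polynomial (RatFunc k))
    (hf : f = X ^ n - C (algebraMap k (RatFunc k) a * RatFunc.X ^ s) * X ^ t + 1) :
    haveI : Fact ((f.map (algebraMap (RatFunc k) f.SplittingField)).Splits) :=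
      ⟨SplittingField.splits f⟩
    Fintype.card (f.rootSet f.SplittingField) = n ∧
      (Polynomial.Gal.galActionHom f f.SplittingField).range = ⊤ := by
  exact stmt_5_general k t htodd n hn a ha s hs f hf
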